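/- arXiv:1311.7441 — 7 statements merged into one kernel-verified Lean document; each statement's English description precedes it below -/
import Mathlib

section
/- Let H be a Hopf algebra over a field k with antipode S, and suppose that the square of the antipode has odd finite order, i.e. (S ∘ S)^(2k-1) = id for some integer k ≥ 1. Then the map σ := (S ∘ S)^k is a bialgebra automorphism of H satisfying σ ∘ σ = S ∘ S; in particular H is almost involutive. -/
open Coalgebra HopfAlgebra TensorProduct

section Helpers

open WithConv

variable {k H : Type*} [Field k] [Ring H] [HopfAlgebra k H]

lemma aux_comul_eq :
    toConv (comul (R := k) (A := H)) =
      toConv (Algebra.TensorProduct.includeLeft (R := k) (S := k) (A := H) (B := H)).toLinearMap *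
      toConv (Algebra.TensorProduct.includeRight (R := k) (A := H) (B := H)).toLinearMap := by
  ext a
  rw [(ℛ k a).convMul_apply]
  simp [(ℛ k a).eq]

lemma aux_swap_eq :
    toConv (TensorProduct.map (antipode k (A := H)) (antipode k (A := H)) ∘ₗ
        (TensorProduct.comm k H H).toLinearMap ∘ₗ comul (R := k) (A := H)) =
      toConv ((Algebra.TensorProduct.includeRight (R := k) (A := H) (B := H)).toLinearMap ∘ₗ
        antipode k (A := H)) *
      toConv ((Algebra.TensorProduct.includeLeft (R := k) (S := k) (A := H)
        (B := H)).toLinearMap ∘ₗ antipode k (A := H)) := by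
  ext a
  rw [(ℛ k a).convMul_apply]
  conv_lhs => simp [← (ℛ k a).eq]
  simp

lemma aux_cancel (f : H →ₐ[k] H ⊗[k] H) :
    toConv (f.toLinearMap ∘ₗ antipode k (A := H)) * toConv f.toLinearMap = 1 := by
  have h := LinearMap.algHom_comp_convMul_distrib f
    (toConv (antipode k (A := H))) (toConv LinearMap.id)
  rw [LinearMap.antipode_mul_id] at h
  apply WithConv.ofConv_injective
  refine Eq.trans h.symm ?_
  ext a
  simp

lemma aux_comul_antipode :
    comul (R := k) (A := H) ∘ₗ antipode k (A := H) =
      TensorProduct.map (antipode k (A := H)) (antipode k (A := H)) ∘ₗ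
        (TensorProduct.comm k H H).toLinearMap ∘ₗ comul (R := k) (A := H) := by
  apply WithConv.toConv_injective
  symm
  apply left_inv_eq_right_inv (a := toConv (comul (R := k) (A := H))) _
    LinearMap.comul_right_inv
  rw [aux_swap_eq, aux_comul_eq]
  have key {M : Type _} [Monoid M] (a b c d : M) (h₁ : b * c = 1) (h₂ : a * d = 1) :
      (a * b) * (c * d) = 1 := by
    rw [mul_assoc, ← mul_assoc b, h₁, one_mul, h₂]
  exact key _ _ _ _ (aux_cancel _) (aux_cancel _)

lemma aux_comul_antipode_sq (x : H) :
    comul (R := k) (antipode k (antipode k x)) =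
      TensorProduct.map (antipode k (A := H) ∘ₗ antipode k (A := H))
        (antipode k (A := H) ∘ₗ antipode k (A := H)) (comul (R := k) x) := by
  have h (y : H) := LinearMap.congr_fun (aux_comul_antipode (k := k) (H := H)) y
  simp only [LinearMap.comp_apply, LinearEquiv.coe_coe] at h
  rw [h, h]
  generalize comul (R := k) x = t
  induction t using TensorProduct.induction_on with
  | zero => simp
  | tmul a b => simp
  | add a b ha hb => simp only [map_add, ha, hb]

variable (k H) in
/-- The square of the antipode as a bialgebra endomorphism. -/
noncomputable def antipodeSqHom : H →ₐc[k] H :=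
  .ofAlgHom (.ofLinearMap (antipode k (A := H) ∘ₗ antipode k (A := H)) (by simp)
      (fun x y => by simp [antipode_mul_antidistrib]))
    (by ext x; simp) (by ext x; exact (aux_comul_antipode_sq x).symm)

variable (k H) in
/-- Powers of the square of the antipode as bialgebra endomorphisms. -/
noncomputable def antipodeSqPow : ℕ → (H →ₐc[k] H)
  | 0 => BialgHom.id k H
  | n + 1 => (antipodeSqPow n).comp (antipodeSqHom k H)

lemma antipodeSqPow_apply (n : ℕ) (x : H) : antipodeSqPow k H n x =
    ((antipode (R := k) (A := H) ∘ₗ antipode (R := k)) ^ n : Module.End k H) x := by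
  induction n generalizing x with
  | zero => rfl
  | succ n ih =>
    rw [pow_succ, Module.End.mul_apply, ← ih]
    rfl

end Helpers

/-- If the square of the antipode of a Hopf algebra `H` over a field `k`
satisfies `(S ∘ S)^(2n-1) = id` for some `n ≥ 1`, then `σ := (S ∘ S)^n` is a bialgebra
automorphism of `H` with `σ ∘ σ = S ∘ S`; in particular `H` is almost involutive. -/
theorem almostInvolutive_of_odd_order_antipode_sq
    (k : Type*) (H : Type*) [Field k] [Ring H] [HopfAlgebra k H]
    (n : ℕ) (hn : 1 ≤ n)
    (hodd : ((antipode (R := k) (A := H) ∘ₗ antipode (R := k)) ^ (2 * n - 1) :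
      Module.End k H) = 1) :
    ∃ σ : H ≃ₐc[k] H,
      (∀ x : H, σ x =
        ((antipode (R := k) (A := H) ∘ₗ antipode (R := k)) ^ n : Module.End k H) x) ∧
      (∀ x : H, σ (σ x) = antipode (R := k) (antipode (R := k) x)) := by
  refine ⟨BialgEquiv.ofBialgHom (antipodeSqPow k H n) (antipodeSqPow k H (n - 1)) ?_ ?_,
    fun x => antipodeSqPow_apply n x, fun x => ?_⟩
  · ext x
    change antipodeSqPow k H n (antipodeSqPow k H (n - 1) x) = x
    rw [antipodeSqPow_apply, antipodeSqPow_apply, ← Module.End.mul_apply, ← pow_add,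
      show n + (n - 1) = 2 * n - 1 by omega, hodd, Module.End.one_apply]
  · ext x
    change antipodeSqPow k H (n - 1) (antipodeSqPow k H n x) = x
    rw [antipodeSqPow_apply, antipodeSqPow_apply, ← Module.End.mul_apply, ← pow_add,
      show n - 1 + n = 2 * n - 1 by omega, hodd, Module.End.one_apply]
  · change antipodeSqPow k H n (antipodeSqPow k H n x) = _
    rw [antipodeSqPow_apply, antipodeSqPow_apply, ← Module.End.mul_apply, ← pow_add,
      show n + n = (2 * n - 1) + 1 by omega, pow_succ, hodd, one_mul]
    rfl
end

section
/- Let H be a Hopf algebra over a commutative ring with antipode S, let g, h ∈ H be grouplike elements, and let x ∈ H be (g,h)-primitive. Then for every natural number n, the n-th iterate of the square of the antipode satisfies (S∘S)^n (x) = (g·S(h))^n · x · (S(g)·h)^n. -/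
open Coalgebra HopfAlgebra TensorProduct

theorem antipode_skew_aux
    {R : Type*} {H : Type*} [CommRing R] [Ring H] [HopfAlgebra R H]
    {g h : H} (hg : IsGroupLikeElem R g) (hh : IsGroupLikeElem R h)
    {x : H} (hx : comul (R := R) x = x ⊗ₜ[R] g + h ⊗ₜ[R] x) :
    antipode R x = -(antipode R h * x * antipode R g) ∧
    comul (R := R) (antipode R x) =
      antipode R x ⊗ₜ[R] antipode R h + antipode R g ⊗ₜ[R] antipode R x := by
  have hc : counit (R := R) x = 0 := by
    have h1 := Coalgebra.lTensor_counit_comul (R := R) x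
    rw [hx] at h1
    have h2 := congrArg (TensorProduct.rid R H) h1
    simp only [map_add, LinearMap.lTensor_tmul, hg.counit_eq_one, TensorProduct.rid_tmul,
      one_smul, add_eq_left] at h2
    have h3 := congrArg (counit (R := R)) h2
    simpa [hh.counit_eq_one] using h3
  have e : antipode R x = -(antipode R h * x * antipode R g) := by
    have h1 := mul_antipode_rTensor_comul_apply (R := R) x
    rw [hx, hc] at h1
    simp only [map_add, LinearMap.rTensor_tmul, LinearMap.mul'_apply, map_zero] at h1
    have h2 : antipode R x * g = -(antipode R h * x) := eq_neg_of_add_eq_zero_left h1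
    calc antipode R x = antipode R x * g * antipode R g := by
          rw [mul_assoc, hg.mul_antipode_cancel, mul_one]
      _ = _ := by rw [h2, neg_mul]
  refine ⟨e, ?_⟩
  rw [e, map_neg, Bialgebra.comul_mul, Bialgebra.comul_mul, hx,
    hh.antipode.comul_eq_tmul_self, hg.antipode.comul_eq_tmul_self, mul_add, add_mul]
  simp only [Algebra.TensorProduct.tmul_mul_tmul, TensorProduct.neg_tmul, TensorProduct.tmul_neg]
  rw [hh.antipode_mul_cancel, one_mul, mul_assoc (antipode R h) g, hg.mul_antipode_cancel,
    mul_one, neg_add]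

/-- If `g, h` are grouplike and `x` is `(g,h)`-primitive in a Hopf algebra
over a commutative ring, then `(S∘S)^n x = (g * S h)^n * x * (S g * h)^n` for all `n : ℕ`. -/
theorem antipode_sq_iterate_of_skew_primitive
    (R : Type*) (H : Type*) [CommRing R] [Ring H] [HopfAlgebra R H]
    (g h : H) (hg : comul (R := R) g = g ⊗ₜ[R] g) (hg' : counit (R := R) g = 1)
    (hh : comul (R := R) h = h ⊗ₜ[R] h) (hh' : counit (R := R) h = 1)
    (x : H) (hx : comul (R := R) x = x ⊗ₜ[R] g + h ⊗ₜ[R] x) (n : ℕ) :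
    (⇑(antipode (R := R) (A := H)) ∘ ⇑(antipode (R := R) (A := H)))^[n] x =
      (g * antipode (R := R) h) ^ n * x * (antipode (R := R) g * h) ^ n := by
  have Hg : IsGroupLikeElem R g := ⟨hg', hg⟩
  have Hh : IsGroupLikeElem R h := ⟨hh', hh⟩
  induction n generalizing x with
  | zero => simp
  | succ n ih =>
    obtain ⟨e1, p1⟩ := antipode_skew_aux Hg Hh hx
    obtain ⟨e2, p2⟩ := antipode_skew_aux Hh.antipode Hg.antipode p1
    rw [Hg.antipode_antipode, Hh.antipode_antipode] at e2 p2
    rw [Function.iterate_succ_apply, Function.comp_apply, ih _ p2, e2, e1, pow_succ,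
      pow_succ' (antipode R g * h)]
    simp only [mul_neg, neg_mul, neg_neg, mul_assoc]
end

section
/- Let H be a Hopf algebra over a field k, let D : H → H be a bialgebra automorphism with D^m = id, and let r ∈ k be an element of multiplicative order 2m if m is even and of order m if m is odd; set q = r². Suppose that for each i with 0 ≤ i ≤ m-1 there are subspaces V_{+,i} and V_{-,i} with V_{+,i} ⊕ V_{-,i} = E_{D,q^i}, that H is the direct sum of all the V_{+,i} and V_{-,i}, and let σ : H → H be the k-linear map acting as multiplication by r^i on V_{+,i} and by -r^i on V_{-,i}. If the subspaces V_{±,i} simultaneously satisfy: (i) 1 ∈ V_{+,0} and the multiplicative inclusions (for 0 ≤ i+j ≤ m-1: V_{+,i}·V_{+,j} + V_{-,i}·V_{-,j} ⊆ V_{+,i+j} and V_{+,i}·V_{-,j} + V_{-,i}·V_{+,j} ⊆ V_{-,i+j}; for m ≤ i+j ≤ 2m-2 the same inclusions into V_{∓,i+j-m} with the signs exchanged when m is even and preserved when m is odd), and (ii) ε(V_{-,0}) = 0 and the comultiplicative inclusions (Δ(V_{±,i}) contained in the corresponding sums of tensor products of the V_{±,a} ⊗ V_{±,b} over a + b = i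 and a + b = i + m, with parity of signs matching σ and with the extra sign twist for a + b = i + m when m is even), then σ is a bialgebra automorphism of H and σ ∘ σ = D. -/
open Coalgebra HopfAlgebra TensorProduct

variable {k H : Type*}

/-- For submodules `U V` of `H`, the image of `U ⊗[k] V` in `H ⊗[k] H`. -/
noncomputable def Submodule.tmul [Field k] [AddCommGroup H] [Module k H]
    (U V : Submodule k H) : Submodule k (TensorProduct k H H) :=
  LinearMap.range (TensorProduct.mapIncl U V)

theorem tmul_le_eqLocus_aux [Field k] [AddCommGroup H] [Module k H]
    (U V : Submodule k H) (σ : H →ₗ[k] H) (a b c : k)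
    (hU : ∀ x ∈ U, σ x = a • x) (hV : ∀ x ∈ V, σ x = b • x) (hc : a * b = c) :
    Submodule.tmul U V ≤
      LinearMap.eqLocus (TensorProduct.map σ σ) (c • LinearMap.id) := by
  rintro _ ⟨t, rfl⟩
  induction t using TensorProduct.induction_on with
  | zero => simp
  | add x y hx hy => rw [map_add]; exact Submodule.add_mem _ hx hy
  | tmul x y =>
    rw [LinearMap.mem_eqLocus]
    simp only [TensorProduct.mapIncl, TensorProduct.map_tmul, Submodule.subtype_apply,
      hU _ x.2, hV _ y.2, LinearMap.smul_apply, LinearMap.id_apply]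
    rw [TensorProduct.smul_tmul_smul, hc]

/-- (Corollary: square roots of bialgebra automorphisms of a Hopf
algebra.)  If the splitting subspaces `V_{±,i}` simultaneously satisfy the multiplicative
and comultiplicative conditions of the algebra and coalgebra square-root theorems, then
the map `σ` acting by `±r^i` on `V_{±,i}` is a bialgebra automorphism of `H` with
`σ ∘ σ = D`. -/
theorem sqrt_bialgebra_automorphism
    [Field k] [Ring H] [HopfAlgebra k H]
    (D : H →ₗ[k] H) (hbij : Function.Bijective D)
    (hD1 : D 1 = 1) (hDmul : ∀ x y : H, D (x * y) = D x * D y)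
    (hDcounit : ∀ x : H, counit (R := k) (D x) = counit (R := k) x)
    (hDcomul : ∀ x : H, comul (R := k) (D x) = TensorProduct.map D D (comul (R := k) x))
    (m : ℕ) (hm : 0 < m) (hDm : (D ^ m : Module.End k H) = 1)
    (r : k) (hr : IsPrimitiveRoot r (if Even m then 2 * m else m))
    (q : k) (hq : q = r ^ 2)
    (Vp Vm : ℕ → Submodule k H)
    (hdisj : ∀ i < m, Disjoint (Vp i) (Vm i))
    (hsup : ∀ i < m, Vp i ⊔ Vm i = Module.End.eigenspace D (q ^ i))
    (hinternal : DirectSum.IsInternal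
      (fun p : Fin m × Bool => if p.2 then Vp (p.1 : ℕ) else Vm (p.1 : ℕ)))
    (σ : H →ₗ[k] H)
    (hσp : ∀ i < m, ∀ x ∈ Vp i, σ x = r ^ i • x)
    (hσm : ∀ i < m, ∀ x ∈ Vm i, σ x = -(r ^ i • x))
    -- (i) the multiplicative conditions
    (hone : (1 : H) ∈ Vp 0)
    (hmul : ∀ i j : ℕ, i < m → j < m →
      (i + j ≤ m - 1 →
        (Vp i * Vp j ⊔ Vm i * Vm j ≤ Vp (i + j)) ∧
        (Vp i * Vm j ⊔ Vm i * Vp j ≤ Vm (i + j))) ∧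
      (m ≤ i + j →
        (Even m →
          (Vp i * Vp j ⊔ Vm i * Vm j ≤ Vm (i + j - m)) ∧
          (Vp i * Vm j ⊔ Vm i * Vp j ≤ Vp (i + j - m))) ∧
        (¬ Even m →
          (Vp i * Vp j ⊔ Vm i * Vm j ≤ Vp (i + j - m)) ∧
          (Vp i * Vm j ⊔ Vm i * Vp j ≤ Vm (i + j - m)))))
    -- (ii) the comultiplicative conditions
    (hcounit : ∀ x ∈ Vm 0, counit (R := k) x = 0)
    (hcomulp : ∀ i : ℕ, i < m →
      Submodule.map (comul (R := k)) (Vp i) ≤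
        (⨆ (p : Fin m × Fin m) (_ : (p.1 : ℕ) + (p.2 : ℕ) = i),
          (Submodule.tmul (Vp (p.1 : ℕ)) (Vp (p.2 : ℕ)) ⊔
           Submodule.tmul (Vm (p.1 : ℕ)) (Vm (p.2 : ℕ)))) ⊔
        (⨆ (p : Fin m × Fin m) (_ : (p.1 : ℕ) + (p.2 : ℕ) = i + m),
          if Even m then
            Submodule.tmul (Vp (p.1 : ℕ)) (Vm (p.2 : ℕ)) ⊔
            Submodule.tmul (Vm (p.1 : ℕ)) (Vp (p.2 : ℕ))
          else
            Submodule.tmul (Vp (p.1 : ℕ)) (Vp (p.2 : ℕ)) ⊔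
            Submodule.tmul (Vm (p.1 : ℕ)) (Vm (p.2 : ℕ))))
    (hcomulm : ∀ i : ℕ, i < m →
      Submodule.map (comul (R := k)) (Vm i) ≤
        (⨆ (p : Fin m × Fin m) (_ : (p.1 : ℕ) + (p.2 : ℕ) = i),
          (Submodule.tmul (Vp (p.1 : ℕ)) (Vm (p.2 : ℕ)) ⊔
           Submodule.tmul (Vm (p.1 : ℕ)) (Vp (p.2 : ℕ)))) ⊔
        (⨆ (p : Fin m × Fin m) (_ : (p.1 : ℕ) + (p.2 : ℕ) = i + m),
          if Even m then
            Submodule.tmul (Vp (p.1 : ℕ)) (Vp (p.2 : ℕ)) ⊔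
            Submodule.tmul (Vm (p.1 : ℕ)) (Vm (p.2 : ℕ))
          else
            Submodule.tmul (Vp (p.1 : ℕ)) (Vm (p.2 : ℕ)) ⊔
            Submodule.tmul (Vm (p.1 : ℕ)) (Vp (p.2 : ℕ)))) :
    ∃ σ' : H ≃ₐc[k] H, (∀ x : H, σ' x = σ x) ∧ (∀ x : H, σ (σ x) = D x) := by
  have hσm' : ∀ i < m, ∀ x ∈ Vm i, σ x = (-r ^ i) • x := by
    intro i hi x hx; rw [hσm i hi x hx, neg_smul]
  have htop : (⨆ p : Fin m × Bool, if p.2 then Vp (p.1 : ℕ) else Vm (p.1 : ℕ)) = ⊤ :=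
    hinternal.submodule_iSup_eq_top
  have key : ∀ S : Submodule k H, (∀ i < m, Vp i ≤ S) → (∀ i < m, Vm i ≤ S) → ∀ x, x ∈ S := by
    intro S h1 h2 x
    have : (⊤ : Submodule k H) ≤ S := by
      rw [← htop]
      refine iSup_le ?_
      rintro ⟨i, b⟩
      cases b
      · simpa using h2 i i.2
      · simpa using h1 i i.2
    exact this trivial
  have hre : Even m → r ^ m = -1 := by
    intro he
    rw [if_pos he] at hr
    have h1 : r ^ m * r ^ m = 1 := by rw [← pow_add, ← two_mul]; exact hr.pow_eq_one
    rcases mul_self_eq_one_iff.mp h1 with h | h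
    · exact absurd (hr.dvd_of_pow_eq_one m h) (Nat.not_dvd_of_pos_of_lt hm (by omega))
    · exact h
  have hro : ¬ Even m → r ^ m = 1 := by
    intro he
    rw [if_neg he] at hr
    exact hr.pow_eq_one
  have hqne : ∀ i < m, i ≠ 0 → q ^ i ≠ 1 := by
    intro i hi h0 h
    rw [hq, ← pow_mul] at h
    have hd := hr.dvd_of_pow_eq_one _ h
    split_ifs at hd with he
    · exact Nat.not_dvd_of_pos_of_lt (by omega) (by omega) hd
    · have hc : Nat.Coprime m 2 := (Nat.coprime_two_right).2 (Nat.not_even_iff_odd.mp he)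
      exact Nat.not_dvd_of_pos_of_lt (by omega) hi (hc.dvd_of_dvd_mul_left hd)
  have hEp : ∀ i < m, ∀ x ∈ Vp i, D x = q ^ i • x := by
    intro i hi x hx
    apply Module.End.mem_eigenspace_iff.mp
    rw [← hsup i hi]; exact Submodule.mem_sup_left hx
  have hEm : ∀ i < m, ∀ x ∈ Vm i, D x = q ^ i • x := by
    intro i hi x hx
    apply Module.End.mem_eigenspace_iff.mp
    rw [← hsup i hi]; exact Submodule.mem_sup_right hx
  have hsq : ∀ x, σ (σ x) = D x := by
    refine key (LinearMap.eqLocus (σ ∘ₗ σ) D) ?_ ?_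
    · intro i hi x hx
      rw [LinearMap.mem_eqLocus, LinearMap.comp_apply, hEp i hi x hx, hσp i hi x hx, map_smul,
        hσp i hi x hx, smul_smul, hq, ← pow_mul, ← pow_add, two_mul]
    · intro i hi x hx
      rw [LinearMap.mem_eqLocus, LinearMap.comp_apply, hEm i hi x hx, hσm' i hi x hx, map_smul,
        hσm' i hi x hx, smul_smul, hq, ← pow_mul, neg_mul_neg, ← pow_add, two_mul]
  have hσbij : Function.Bijective σ := by
    constructor
    · intro x y h
      apply hbij.1
      rw [← hsq, ← hsq, h]
    · intro y
      obtain ⟨x, hx⟩ := hbij.2 y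
      exact ⟨σ x, by rw [hsq, hx]⟩
  have hσ1 : σ 1 = 1 := by rw [hσp 0 hm 1 hone, pow_zero, one_smul]
  have hε0 : ∀ i < m, i ≠ 0 → ∀ x, D x = q ^ i • x → counit (R := k) x = 0 := by
    intro i hi h0 x hx
    have h := hDcounit x
    rw [hx, map_smul, smul_eq_mul] at h
    have h2 : (q ^ i - 1) * counit (R := k) x = 0 := by rw [sub_mul, h, one_mul, sub_self]
    exact (mul_eq_zero.mp h2).resolve_left (sub_ne_zero.mpr (hqne i hi h0))
  have hσε : ∀ x, counit (R := k) (σ x) = counit (R := k) x := by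
    refine key (LinearMap.eqLocus (counit (R := k) ∘ₗ σ) (counit (R := k))) ?_ ?_
    · intro i hi x hx
      rw [LinearMap.mem_eqLocus, LinearMap.comp_apply, hσp i hi x hx, map_smul]
      rcases eq_or_ne i 0 with rfl | h0
      · simp
      · rw [hε0 i hi h0 x (hEp i hi x hx), smul_zero]
    · intro i hi x hx
      rw [LinearMap.mem_eqLocus, LinearMap.comp_apply, hσm' i hi x hx, map_smul]
      rcases eq_or_ne i 0 with rfl | h0
      · rw [hcounit x hx, smul_zero]
      · rw [hε0 i hi h0 x (hEm i hi x hx), smul_zero]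
  -- multiplicativity
  have hwrap : ∀ i j : ℕ, m ≤ i + j → r ^ i * r ^ j = r ^ m * r ^ (i + j - m) := by
    intro i j h
    rw [← pow_add, ← pow_add]; congr 1; omega
  have hpp : ∀ i < m, ∀ j < m, ∀ x y, (x ∈ Vp i ∧ y ∈ Vp j ∨ x ∈ Vm i ∧ y ∈ Vm j) →
      σ (x * y) = (r ^ i * r ^ j) • (x * y) := by
    intro i hi j hj x y hxy
    have hmem : x * y ∈ Vp i * Vp j ⊔ Vm i * Vm j := by
      rcases hxy with ⟨a, b⟩ | ⟨a, b⟩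
      · exact Submodule.mem_sup_left (Submodule.mul_mem_mul a b)
      · exact Submodule.mem_sup_right (Submodule.mul_mem_mul a b)
    rcases Nat.lt_or_ge (i + j) m with h | h
    · rw [hσp (i + j) h _ (((hmul i j hi hj).1 (by omega)).1 hmem), pow_add]
    · by_cases he : Even m
      · rw [hσm' (i + j - m) (by omega) _ ((((hmul i j hi hj).2 h).1 he).1 hmem), hwrap i j h,
          hre he, neg_one_mul]
      · rw [hσp (i + j - m) (by omega) _ ((((hmul i j hi hj).2 h).2 he).1 hmem), hwrap i j h,
          hro he, one_mul]
  have hpm : ∀ i < m, ∀ j < m, ∀ x y, (x ∈ Vp i ∧ y ∈ Vm j ∨ x ∈ Vm i ∧ y ∈ Vp j) →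
      σ (x * y) = (-(r ^ i * r ^ j)) • (x * y) := by
    intro i hi j hj x y hxy
    have hmem : x * y ∈ Vp i * Vm j ⊔ Vm i * Vp j := by
      rcases hxy with ⟨a, b⟩ | ⟨a, b⟩
      · exact Submodule.mem_sup_left (Submodule.mul_mem_mul a b)
      · exact Submodule.mem_sup_right (Submodule.mul_mem_mul a b)
    rcases Nat.lt_or_ge (i + j) m with h | h
    · rw [hσm' (i + j) h _ (((hmul i j hi hj).1 (by omega)).2 hmem), pow_add]
    · by_cases he : Even m
      · rw [hσp (i + j - m) (by omega) _ ((((hmul i j hi hj).2 h).1 he).2 hmem), hwrap i j h,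
          hre he, neg_one_mul, neg_neg]
      · rw [hσm' (i + j - m) (by omega) _ ((((hmul i j hi hj).2 h).2 he).2 hmem), hwrap i j h,
          hro he, one_mul]
  have hσmul : ∀ x y, σ (x * y) = σ x * σ y := by
    intro x y
    refine key (LinearMap.eqLocus (σ ∘ₗ LinearMap.mulRight k y)
      (LinearMap.mulRight k (σ y) ∘ₗ σ)) ?_ ?_ x
    · intro i hi x hx
      refine key (LinearMap.eqLocus (σ ∘ₗ LinearMap.mulLeft k x)
        (LinearMap.mulLeft k (σ x) ∘ₗ σ)) ?_ ?_ y
      · intro j hj y hy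
        simp only [LinearMap.mem_eqLocus, LinearMap.comp_apply, LinearMap.mulLeft_apply]
        rw [hpp i hi j hj x y (Or.inl ⟨hx, hy⟩), hσp i hi x hx, hσp j hj y hy, smul_mul_smul_comm]
      · intro j hj y hy
        simp only [LinearMap.mem_eqLocus, LinearMap.comp_apply, LinearMap.mulLeft_apply]
        rw [hpm i hi j hj x y (Or.inl ⟨hx, hy⟩), hσp i hi x hx, hσm' j hj y hy, smul_mul_smul_comm,
          mul_neg]
    · intro i hi x hx
      refine key (LinearMap.eqLocus (σ ∘ₗ LinearMap.mulLeft k x)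
        (LinearMap.mulLeft k (σ x) ∘ₗ σ)) ?_ ?_ y
      · intro j hj y hy
        simp only [LinearMap.mem_eqLocus, LinearMap.comp_apply, LinearMap.mulLeft_apply]
        rw [hpm i hi j hj x y (Or.inr ⟨hx, hy⟩), hσm' i hi x hx, hσp j hj y hy, smul_mul_smul_comm,
          neg_mul]
      · intro j hj y hy
        simp only [LinearMap.mem_eqLocus, LinearMap.comp_apply, LinearMap.mulLeft_apply]
        rw [hpp i hi j hj x y (Or.inr ⟨hx, hy⟩), hσm' i hi x hx, hσm' j hj y hy,
          smul_mul_smul_comm, neg_mul_neg]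
  -- comultiplicativity
  have hTpp : ∀ (a b : Fin m) (c : k), r ^ (a : ℕ) * r ^ (b : ℕ) = c →
      Submodule.tmul (Vp a) (Vp b) ⊔ Submodule.tmul (Vm a) (Vm b) ≤
        LinearMap.eqLocus (TensorProduct.map σ σ) (c • LinearMap.id) := by
    intro a b c hc
    refine sup_le ?_ ?_
    · exact tmul_le_eqLocus_aux _ _ σ _ _ c (hσp a a.2) (hσp b b.2) hc
    · exact tmul_le_eqLocus_aux _ _ σ _ _ c (hσm' a a.2) (hσm' b b.2) (by rw [neg_mul_neg, hc])
  have hTpm : ∀ (a b : Fin m) (c : k), -(r ^ (a : ℕ) * r ^ (b : ℕ)) = c →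
      Submodule.tmul (Vp a) (Vm b) ⊔ Submodule.tmul (Vm a) (Vp b) ≤
        LinearMap.eqLocus (TensorProduct.map σ σ) (c • LinearMap.id) := by
    intro a b c hc
    refine sup_le ?_ ?_
    · exact tmul_le_eqLocus_aux _ _ σ _ _ c (hσp a a.2) (hσm' b b.2) (by rw [mul_neg, hc])
    · exact tmul_le_eqLocus_aux _ _ σ _ _ c (hσm' a a.2) (hσp b b.2) (by rw [neg_mul, hc])
  have hσΔ : ∀ x, TensorProduct.map σ σ (comul (R := k) x) = comul (R := k) (σ x) := by
    refine key (LinearMap.eqLocus (TensorProduct.map σ σ ∘ₗ comul (R := k))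
      (comul (R := k) ∘ₗ σ)) ?_ ?_
    · intro i hi x hx
      have hle := (hcomulp i hi).trans (c := LinearMap.eqLocus (TensorProduct.map σ σ)
          (r ^ i • LinearMap.id)) (by
        refine sup_le (iSup₂_le ?_) (iSup₂_le ?_)
        · rintro ⟨a, b⟩ hab
          exact hTpp a b _ (by rw [← pow_add]; exact congrArg _ hab)
        · rintro ⟨a, b⟩ hab
          have hw : r ^ (a : ℕ) * r ^ (b : ℕ) = r ^ i * r ^ m := by
            rw [← pow_add, ← pow_add]; exact congrArg _ hab
          split_ifs with he
          · exact hTpm a b _ (by rw [hw, hre he]; ring)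
          · exact hTpp a b _ (by rw [hw, hro he]; ring))
      have := hle (Submodule.mem_map_of_mem hx)
      rw [LinearMap.mem_eqLocus] at this ⊢
      rw [LinearMap.comp_apply, LinearMap.comp_apply, hσp i hi x hx, map_smul, this]
      rfl
    · intro i hi x hx
      have hle := (hcomulm i hi).trans (c := LinearMap.eqLocus (TensorProduct.map σ σ)
          ((-r ^ i) • LinearMap.id)) (by
        refine sup_le (iSup₂_le ?_) (iSup₂_le ?_)
        · rintro ⟨a, b⟩ hab
          exact hTpm a b _ (by rw [← pow_add]; exact congrArg (fun n => - r ^ n) hab)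
        · rintro ⟨a, b⟩ hab
          have hw : r ^ (a : ℕ) * r ^ (b : ℕ) = r ^ i * r ^ m := by
            rw [← pow_add, ← pow_add]; exact congrArg _ hab
          split_ifs with he
          · exact hTpp a b _ (by rw [hw, hre he]; ring)
          · exact hTpm a b _ (by rw [hw, hro he]; ring))
      have := hle (Submodule.mem_map_of_mem hx)
      rw [LinearMap.mem_eqLocus] at this ⊢
      rw [LinearMap.comp_apply, LinearMap.comp_apply, hσm' i hi x hx, map_smul, this]
      rfl
  let f : H →ₐc[k] H := BialgHom.ofAlgHom (AlgHom.ofLinearMap σ hσ1 hσmul)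
    (AlgHom.ext hσε) (AlgHom.ext hσΔ)
  exact ⟨BialgEquiv.ofBijective f hσbij, fun x => rfl, hsq⟩
end

section
/- Let H be a Hopf algebra over a field k, let D : H → H be a bialgebra automorphism with D^m = id where m is odd, let q ∈ k be a primitive m-th root of unity and r ∈ k an element of multiplicative order m with r² = q. Suppose H is the direct sum of the eigenspaces E_{D,q^i}, 0 ≤ i ≤ m-1. Then the k-linear map σ : H → H acting as multiplication by r^i on E_{D,q^i} for each i is a bialgebra automorphism of H satisfying σ ∘ σ = D. -/
open Coalgebra HopfAlgebra TensorProduct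

/-- Let `D` be a bialgebra automorphism of a Hopf algebra `H` over a
field `k` with `D ^ m = id`, `m` odd, `q` a primitive `m`-th root of unity and `r` of
order `m` with `r² = q`.  If `H` is the direct sum of the eigenspaces `E_{D,q^i}`, then
the linear map `σ` acting by `r^i` on `E_{D,q^i}` is a bialgebra automorphism of `H`
with `σ ∘ σ = D`. -/
theorem sqrt_bialgebra_automorphism_odd
    (k H : Type*) [Field k] [Ring H] [HopfAlgebra k H]
    (D : H →ₗ[k] H) (hbij : Function.Bijective D)
    (hD1 : D 1 = 1) (hDmul : ∀ x y : H, D (x * y) = D x * D y)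
    (hDcounit : ∀ x : H, counit (R := k) (D x) = counit (R := k) x)
    (hDcomul : ∀ x : H, comul (R := k) (D x) = TensorProduct.map D D (comul (R := k) x))
    (m : ℕ) (hmodd : Odd m) (hDm : (D ^ m : Module.End k H) = 1)
    (q : k) (hq : IsPrimitiveRoot q m)
    (r : k) (hr : IsPrimitiveRoot r m) (hrq : r ^ 2 = q)
    (hinternal : DirectSum.IsInternal
      (fun i : Fin m => Module.End.eigenspace D (q ^ (i : ℕ))))
    (σ : H →ₗ[k] H)
    (hσ : ∀ i < m, ∀ x ∈ Module.End.eigenspace D (q ^ i), σ x = r ^ i • x) :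
    ∃ σ' : H ≃ₐc[k] H, (∀ x : H, σ' x = σ x) ∧ (∀ x : H, σ (σ x) = D x) := by
  obtain ⟨t, ht⟩ := hmodd
  have hqr : q ^ (t + 1) = r := by
    rw [← hrq, ← pow_mul, show 2 * (t + 1) = m + 1 by omega, pow_succ, hr.pow_eq_one, one_mul]
  have key : ∀ n : ℕ, ((D ^ n : Module.End k H) 1 = 1) ∧
      (∀ x y : H, (D ^ n : Module.End k H) (x * y)
        = (D ^ n : Module.End k H) x * (D ^ n : Module.End k H) y) ∧
      (∀ x : H, counit (R := k) ((D ^ n : Module.End k H) x) = counit (R := k) x) ∧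
      (∀ x : H, comul (R := k) ((D ^ n : Module.End k H) x)
        = TensorProduct.map (D ^ n : Module.End k H) (D ^ n : Module.End k H)
          (comul (R := k) x)) := by
    intro n
    induction n with
    | zero => simp [Module.End.one_eq_id]
    | succ n ih =>
      obtain ⟨h1, h2, h3, h4⟩ := ih
      refine ⟨?_, ?_, ?_, ?_⟩
      · rw [pow_succ', Module.End.mul_apply, h1, hD1]
      · intro x y
        simp only [pow_succ', Module.End.mul_apply, h2, hDmul]
      · intro x
        rw [pow_succ', Module.End.mul_apply, hDcounit, h3]
      · intro x
        rw [pow_succ', Module.End.mul_apply, hDcomul, h4, Module.End.mul_eq_comp,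
          TensorProduct.map_comp, LinearMap.comp_apply]
  have heig : ∀ (n : ℕ) (c : k) (x : H), D x = c • x →
      (D ^ n : Module.End k H) x = c ^ n • x := by
    intro n c x hx
    induction n with
    | zero => simp
    | succ n ih =>
      rw [pow_succ', Module.End.mul_apply, ih, map_smul, hx, smul_smul, pow_succ]
  have hσD : σ = (D ^ (t + 1) : Module.End k H) := by
    ext x
    have hx : x ∈ ⨆ i : Fin m, Module.End.eigenspace D (q ^ (i : ℕ)) := by
      rw [hinternal.submodule_iSup_eq_top]
      trivial
    induction hx using Submodule.iSup_induction' with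
    | mem i x hx =>
      rw [hσ i i.2 x hx, heig _ _ x (Module.End.mem_eigenspace_iff.mp hx), ← pow_mul,
        mul_comm, pow_mul, hqr]
    | zero => simp
    | add x y _ _ hx hy => rw [map_add, map_add, hx, hy]
  have hsq : ∀ x : H, σ (σ x) = D x := by
    intro x
    rw [hσD, ← Module.End.mul_apply, ← pow_add, show t + 1 + (t + 1) = m + 1 by omega,
      pow_succ, hDm, one_mul]
  obtain ⟨h1, h2, h3, h4⟩ := key (t + 1)
  rw [← hσD] at h1 h2 h3 h4
  have hb : Function.Bijective σ := by
    constructor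
    · intro x y hxy
      apply hbij.1
      rw [← hsq, ← hsq, hxy]
    · intro y
      obtain ⟨x, hx⟩ := hbij.2 y
      exact ⟨σ x, by rw [hsq, hx]⟩
  let f : H →ₐc[k] H := BialgHom.ofAlgHom (AlgHom.ofLinearMap σ h1 h2)
    (by ext x; exact h3 x) (by ext x; exact (h4 x).symm)
  exact ⟨BialgEquiv.ofBijective f hb, fun x => rfl, hsq⟩
end

section
/- Let H be a Hopf algebra over a field k with comultiplication Δ and counit ε, let D : H → H be a bialgebra automorphism with D^m = id where m is even, let q ∈ k be a primitive m-th root of unity and r ∈ k an element of multiplicative order 2m with r² = q. Suppose H is the direct sum of the eigenspaces E_{D,q^i}, 0 ≤ i ≤ m-1, and let σ : H → H be the k-linear map acting as multiplication by r^i on E_{D,q^i}. Then σ ∘ σ = D, and σ is a bialgebra automorphism of H if and only if: (a) E_{D,q^i} · E_{D,q^j} = 0 for all i, j with m ≤ i + j ≤ 2m-2, and (b) for every i, Δ(E_{D,q^i}) is contained in the sum of the subspaces E_{D,q^a} ⊗ E_{D,q^b} over pairs a + b = i. -/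
open Coalgebra HopfAlgebra TensorProduct

variable {k H : Type*}

theorem aux_tmul_mem [Field k] [AddCommGroup H] [Module k H] {U V : Submodule k H} {x y : H}
    (hx : x ∈ U) (hy : y ∈ V) : x ⊗ₜ[k] y ∈ Submodule.tmul U V :=
  ⟨(⟨x, hx⟩ : U) ⊗ₜ[k] (⟨y, hy⟩ : V), by simp [TensorProduct.mapIncl]⟩

theorem aux_tmul_le [Field k] [AddCommGroup H] [Module k H] {U V : Submodule k H}
    {W : Submodule k (TensorProduct k H H)}
    (h : ∀ x ∈ U, ∀ y ∈ V, x ⊗ₜ[k] y ∈ W) : Submodule.tmul U V ≤ W := by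
  rintro _ ⟨t, rfl⟩
  induction t with
  | zero => simp
  | tmul x y => simpa [TensorProduct.mapIncl] using h x x.2 y y.2
  | add a b ha hb => rw [map_add]; exact W.add_mem ha hb

/-- Let `D` be a bialgebra automorphism of a Hopf algebra `H` over a
field `k` with `D ^ m = id`, `m` even, `q` a primitive `m`-th root of unity and `r` of
order `2m` with `r² = q`.  If `H` is the direct sum of the eigenspaces `E_{D,q^i}` and `σ`
is the linear map acting by `r^i` on `E_{D,q^i}`, then `σ ∘ σ = D`, and `σ` is a bialgebra
automorphism of `H` iff `E_{D,q^i}·E_{D,q^j} = 0` whenever `m ≤ i + j ≤ 2m-2` and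
`Δ(E_{D,q^i}) ⊆ ⨁_{a+b=i} E_{D,q^a} ⊗ E_{D,q^b}` for every `i`. -/
theorem sqrt_bialgebra_automorphism_even_iff
    [Field k] [Ring H] [HopfAlgebra k H]
    (D : H →ₗ[k] H) (hbij : Function.Bijective D)
    (hD1 : D 1 = 1) (hDmul : ∀ x y : H, D (x * y) = D x * D y)
    (hDcounit : ∀ x : H, counit (R := k) (D x) = counit (R := k) x)
    (hDcomul : ∀ x : H, comul (R := k) (D x) = TensorProduct.map D D (comul (R := k) x))
    (m : ℕ) (hmeven : Even m) (hm : 0 < m) (hDm : (D ^ m : Module.End k H) = 1)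
    (q : k) (hq : IsPrimitiveRoot q m)
    (r : k) (hr : IsPrimitiveRoot r (2 * m)) (hrq : r ^ 2 = q)
    (hinternal : DirectSum.IsInternal
      (fun i : Fin m => Module.End.eigenspace D (q ^ (i : ℕ))))
    (σ : H →ₗ[k] H)
    (hσ : ∀ i < m, ∀ x ∈ Module.End.eigenspace D (q ^ i), σ x = r ^ i • x) :
    (∀ x : H, σ (σ x) = D x) ∧
    ((Function.Bijective σ ∧ σ 1 = 1 ∧ (∀ x y : H, σ (x * y) = σ x * σ y) ∧
      (∀ x : H, counit (R := k) (σ x) = counit (R := k) x) ∧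
      (∀ x : H, comul (R := k) (σ x) = TensorProduct.map σ σ (comul (R := k) x))) ↔
      ((∀ i j : ℕ, i < m → j < m → m ≤ i + j →
          Module.End.eigenspace D (q ^ i) * Module.End.eigenspace D (q ^ j) = ⊥) ∧
       (∀ i : ℕ, i < m →
          Submodule.map (comul (R := k)) (Module.End.eigenspace D (q ^ i)) ≤
            ⨆ (p : Fin m × Fin m) (_ : (p.1 : ℕ) + (p.2 : ℕ) = i),
              Submodule.tmul (Module.End.eigenspace D (q ^ (p.1 : ℕ)))
                (Module.End.eigenspace D (q ^ (p.2 : ℕ)))))) := by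
  have htop : ⨆ i : Fin m, Module.End.eigenspace D (q ^ (i : ℕ)) = ⊤ :=
    hinternal.submodule_iSup_eq_top
  have ind : ∀ (P : H → Prop), P 0 → (∀ x y, P x → P y → P (x + y)) →
      (∀ i < m, ∀ x ∈ Module.End.eigenspace D (q ^ i), P x) → ∀ x, P x := by
    intro P h0 hadd hP x
    have hx : x ∈ ⨆ i : Fin m, Module.End.eigenspace D (q ^ (i : ℕ)) := by
      rw [htop]; trivial
    exact Submodule.iSup_induction _ (motive := P) hx (fun i x hx => hP i i.2 x hx) h0 hadd
  have hr0 : r ≠ 0 := hr.ne_zero (by omega)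
  have hss : ∀ x : H, σ (σ x) = D x := by
    refine ind _ (by simp) (fun x y hx hy => by simp [hx, hy]) ?_
    intro i hi x hx
    rw [hσ i hi x hx, map_smul, hσ i hi x hx, Module.End.mem_eigenspace_iff.1 hx, smul_smul,
      ← hrq, ← pow_mul, ← pow_add]
    congr 2; ring
  have hmulmem : ∀ i j : ℕ, ∀ x ∈ Module.End.eigenspace D (q ^ i),
      ∀ y ∈ Module.End.eigenspace D (q ^ j), x * y ∈ Module.End.eigenspace D (q ^ (i + j)) := by
    intro i j x hx y hy
    rw [Module.End.mem_eigenspace_iff] at *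
    rw [hDmul, hx, hy, smul_mul_smul_comm, pow_add]
  have hB : ∀ i j : ℕ, i < m → j < m → ∀ x ∈ Module.End.eigenspace D (q ^ i),
      ∀ y ∈ Module.End.eigenspace D (q ^ j),
      TensorProduct.map σ σ (x ⊗ₜ[k] y) = r ^ (i + j) • (x ⊗ₜ[k] y) := by
    intro i j hi hj x hx y hy
    rw [TensorProduct.map_tmul, hσ i hi x hx, hσ j hj y hy, TensorProduct.smul_tmul_smul, pow_add]
  have hle : ∀ p : Fin m × Fin m,
      Submodule.tmul (Module.End.eigenspace D (q ^ (p.1 : ℕ)))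
        (Module.End.eigenspace D (q ^ (p.2 : ℕ))) ≤
      Module.End.eigenspace (TensorProduct.map σ σ) (r ^ ((p.1 : ℕ) + (p.2 : ℕ))) := by
    intro p
    refine aux_tmul_le fun x hx y hy => ?_
    rw [Module.End.mem_eigenspace_iff]
    exact hB _ _ p.1.2 p.2.2 x hx y hy
  have hleA : ∀ i : ℕ, (⨆ (p : Fin m × Fin m) (_ : (p.1 : ℕ) + (p.2 : ℕ) = i),
              Submodule.tmul (Module.End.eigenspace D (q ^ (p.1 : ℕ)))
                (Module.End.eigenspace D (q ^ (p.2 : ℕ)))) ≤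
      Module.End.eigenspace (TensorProduct.map σ σ) (r ^ i) := by
    intro i
    refine iSup₂_le fun p hp => ?_
    rw [← hp]; exact hle p
  refine ⟨hss, ?_, ?_⟩
  · rintro ⟨-, -, hmul, -, hcomul⟩
    constructor
    · intro i j hi hj hij
      rw [eq_bot_iff, Submodule.mul_le]
      intro x hx y hy
      obtain ⟨l, hl⟩ := Nat.exists_eq_add_of_le hij
      have h1 := hmulmem i j x hx y hy
      rw [hl, pow_add, hq.pow_eq_one, one_mul] at h1
      have h2 := hσ l (by omega) _ h1
      rw [hmul, hσ i hi x hx, hσ j hj y hy, smul_mul_smul_comm, ← pow_add, hl, ← sub_eq_zero,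
        ← sub_smul, smul_eq_zero] at h2
      rcases h2 with h2 | h2
      · exfalso
        have h3 : r ^ (m + l) = r ^ l := sub_eq_zero.1 h2
        have := hr.pow_inj (by omega) (by omega) h3
        omega
      · simpa using h2
    · rintro i hi _ ⟨x, hx, rfl⟩
      have hxe : comul (R := k) x ∈ Module.End.eigenspace (TensorProduct.map σ σ) (r ^ i) := by
        rw [Module.End.mem_eigenspace_iff, ← hcomul, hσ i hi x hx, map_smul]
      set A := (⨆ (p : Fin m × Fin m) (_ : (p.1 : ℕ) + (p.2 : ℕ) = i),
              Submodule.tmul (Module.End.eigenspace D (q ^ (p.1 : ℕ)))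
                (Module.End.eigenspace D (q ^ (p.2 : ℕ)))) with hA
      have hAB : ∀ t : TensorProduct k H H, t ∈ A ⊔ ⨆ (μ : k) (_ : μ ≠ r ^ i),
          Module.End.eigenspace (TensorProduct.map σ σ) μ := by
        intro t
        induction t with
        | zero => exact Submodule.zero_mem _
        | add a b ha hb => exact Submodule.add_mem _ ha hb
        | tmul x y =>
          revert x
          refine ind _ (by simp) (fun a b ha hb => by
            rw [TensorProduct.add_tmul]; exact Submodule.add_mem _ ha hb) ?_
          intro a ha x hx
          revert y
          refine ind _ (by simp) (fun a b ha hb => by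
            rw [TensorProduct.tmul_add]; exact Submodule.add_mem _ ha hb) ?_
          intro b hb y hy
          have hmem := aux_tmul_mem hx hy
          by_cases hab : a + b = i
          · refine Submodule.mem_sup_left ?_
            exact (le_iSup₂_of_le (f := fun (p : Fin m × Fin m)
              (_ : (p.1 : ℕ) + (p.2 : ℕ) = i) =>
              Submodule.tmul (Module.End.eigenspace D (q ^ (p.1 : ℕ)))
                (Module.End.eigenspace D (q ^ (p.2 : ℕ))))
              ((⟨a, ha⟩, ⟨b, hb⟩) : Fin m × Fin m) hab le_rfl) hmem
          · refine Submodule.mem_sup_right ?_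
            have hne : r ^ (a + b) ≠ r ^ i := fun h =>
              hab (hr.pow_inj (by omega) (by omega) h)
            exact (le_iSup₂_of_le (f := fun (μ : k) (_ : μ ≠ r ^ i) =>
              Module.End.eigenspace (TensorProduct.map σ σ) μ) _ hne le_rfl)
              (hle (⟨a, ha⟩, ⟨b, hb⟩) hmem)
      obtain ⟨w, hw, z, hz, hwz⟩ := Submodule.mem_sup.1 (hAB (comul (R := k) x))
      have hz' : z ∈ Module.End.eigenspace (TensorProduct.map σ σ) (r ^ i) := by
        have : z = comul (R := k) x - w := by rw [← hwz]; abel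
        rw [this]
        exact Submodule.sub_mem _ hxe (hleA i hw)
      have hz0 : z = 0 := Submodule.disjoint_def.1
        (Module.End.eigenspaces_iSupIndep (TensorProduct.map σ σ) (r ^ i)) z hz' hz
      rw [← hwz, hz0, add_zero]
      exact hw
  · rintro ⟨ha, hb⟩
    refine ⟨?_, ?_, ?_, ?_, ?_⟩
    · have hc : σ ∘ σ = D := funext hss
      rw [← hc] at hbij
      exact ⟨hbij.1.of_comp, hbij.2.of_comp⟩
    · have := hσ 0 hm 1 (by rw [Module.End.mem_eigenspace_iff]; simpa using hD1)
      simpa using this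
    · intro x y
      revert x
      refine ind _ (by simp) (fun a b ha hb => by simp [add_mul, ha, hb]) ?_
      intro i hi x hx
      revert y
      refine ind _ (by simp) (fun a b ha hb => by simp [mul_add, ha, hb]) ?_
      intro j hj y hy
      rw [hσ i hi x hx, hσ j hj y hy, smul_mul_smul_comm, ← pow_add]
      by_cases hij : i + j < m
      · exact hσ _ hij _ (hmulmem i j x hx y hy)
      · have h0 : x * y ∈ (⊥ : Submodule k H) := by
          rw [← ha i j hi hj (by omega)]; exact Submodule.mul_mem_mul hx hy
        rw [Submodule.mem_bot] at h0
        simp [h0]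
    · refine ind _ (by simp) (fun a b ha hb => by simp [ha, hb]) ?_
      intro i hi x hx
      rw [hσ i hi x hx]
      rcases Nat.eq_zero_or_pos i with rfl | hpos
      · simp
      · have h1 := hDcounit x
        rw [Module.End.mem_eigenspace_iff.1 hx, map_smul, ← sub_eq_zero, smul_eq_mul,
          ← sub_one_mul, mul_eq_zero] at h1
        rcases h1 with h1 | h1
        · exact absurd (sub_eq_zero.1 h1) (hq.pow_ne_one_of_pos_of_lt (by omega) hi)
        · simp [h1]
    · refine ind _ (by simp) (fun a b ha hb => by simp [ha, hb]) ?_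
      intro i hi x hx
      have h1 := hleA i (hb i hi ⟨x, hx, rfl⟩)
      rw [Module.End.mem_eigenspace_iff] at h1
      rw [h1, hσ i hi x hx, map_smul]
end

section
/- Let H be a coalgebra over a field k with comultiplication Δ and counit ε, and let K and M be subspaces of H such that H = K ⊕ M (internal direct sum of k-subspaces) and Δ(M) ⊆ K ⊗ M + M ⊗ K (as subspaces of H ⊗_k H). Then ε(M) = 0, i.e. the counit vanishes on M. -/
open Coalgebra HopfAlgebra TensorProduct

variable {k H : Type*}

/-- If `H = K ⊕ M` is a coalgebra over a field `k` with
`Δ(M) ⊆ K ⊗ M + M ⊗ K`, then the counit vanishes on `M`. -/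
theorem counit_eq_zero_of_comul_mem
    [Field k] [AddCommGroup H] [Module k H] [Coalgebra k H]
    (K M : Submodule k H) (hcompl : IsCompl K M)
    (hΔM : Submodule.map (comul (R := k)) M ≤ Submodule.tmul K M ⊔ Submodule.tmul M K) :
    ∀ x ∈ M, counit (R := k) x = 0 := by
  intro x hx
  set e : H →ₗ[k] k := counit (R := k) with he
  let L : H ⊗[k] H →ₗ[k] H := (TensorProduct.lid k H).toLinearMap ∘ₗ e.rTensor H
  let R : H ⊗[k] H →ₗ[k] H := (TensorProduct.rid k H).toLinearMap ∘ₗ e.lTensor H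
  have hL : L (comul (R := k) x) = x := by simp [L, he]
  have hR : R (comul (R := k) x) = x := by simp [R, he]
  have hLR : e ∘ₗ L = e ∘ₗ R := by
    ext a b
    simp [L, R, mul_comm]
  have memL : ∀ U V : Submodule k H, ∀ t ∈ Submodule.tmul U V, L t ∈ V := by
    rintro U V _ ⟨t, rfl⟩
    induction t using TensorProduct.induction_on with
    | zero => simp
    | tmul u v =>
      simpa [L, TensorProduct.mapIncl] using V.smul_mem (e u) v.2
    | add s t hs ht => rw [map_add, map_add]; exact V.add_mem hs ht
  have memR : ∀ U V : Submodule k H, ∀ t ∈ Submodule.tmul U V, R t ∈ U := by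
    rintro U V _ ⟨t, rfl⟩
    induction t using TensorProduct.induction_on with
    | zero => simp
    | tmul u v =>
      simpa [R, TensorProduct.mapIncl] using U.smul_mem (e v) u.2
    | add s t hs ht => rw [map_add, map_add]; exact U.add_mem hs ht
  obtain ⟨a, ha, b, hb, hab⟩ := Submodule.mem_sup.1 (hΔM (Submodule.mem_map_of_mem hx))
  have hd := Submodule.disjoint_def.1 hcompl.disjoint
  rw [← hab, map_add] at hL hR
  have hb0 : L b = 0 := by
    refine hd _ (memL _ _ _ hb) ?_
    rw [eq_sub_of_add_eq' hL]
    exact M.sub_mem hx (memL _ _ _ ha)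
  have ha0 : R a = 0 := by
    refine hd _ (memR _ _ _ ha) ?_
    rw [eq_sub_of_add_eq hR]
    exact M.sub_mem hx (memR _ _ _ hb)
  have h1 : e (L a) = e (R a) := LinearMap.congr_fun hLR a
  rw [← hL, hb0, add_zero, h1, ha0, map_zero]
end

section
/- Let H be a Hopf algebra over a field k with antipode S, comultiplication Δ and counit ε, such that D := S ∘ S is a bialgebra automorphism with D^m = id, and suppose H is the direct sum of the eigenspaces E_{D,q^i}, 0 ≤ i ≤ m-1, for a primitive m-th root of unity q ∈ k (and k contains an element r of order 2m with r² = q when m is even). Set K = E_{D,1} = {x ∈ H : S(S(x)) = x} and M = the sum of the eigenspaces E_{D,q^i} with i ≠ 0, and assume H = K ⊕ M is a trivial extension: K is a subalgebra with Δ(K) ⊆ K ⊗ K and S(K) ⊆ K; K·M + M·K ⊆ M; Δ(M) ⊆ K ⊗ M + M ⊗ K; S(M) ⊆ M; and M·M = 0. Then H is almost involutive: there exists a bialgebra automorphism σ of H with σ ∘ σ = S ∘ S. -/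
open Coalgebra HopfAlgebra TensorProduct

variable {k H : Type*}

/-- The antipode is an anti-coalgebra map. -/
theorem antipode_anticomul_aux [Field k] [Ring H] [HopfAlgebra k H] :
    (comul (R := k) (A := H)) ∘ₗ antipode k =
      TensorProduct.map (antipode k) (antipode k) ∘ₗ
        (TensorProduct.comm k H H).toLinearMap ∘ₗ comul := by
  let i1 : H →ₐ[k] H ⊗[k] H := Algebra.TensorProduct.includeLeft
  let i2 : H →ₐ[k] H ⊗[k] H := Algebra.TensorProduct.includeRight
  have hone : ∀ i : H →ₐ[k] H ⊗[k] H,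
      WithConv.toConv (i.toLinearMap ∘ₗ antipode k) * WithConv.toConv i.toLinearMap = 1 := by
    intro i
    have h := LinearMap.algHom_comp_convMul_distrib i (WithConv.toConv (antipode k (A := H)))
      (WithConv.toConv (LinearMap.id : H →ₗ[k] H))
    rw [LinearMap.antipode_mul_id] at h
    apply WithConv.ofConv_injective
    refine Eq.trans h.symm ?_
    ext x
    simp [LinearMap.convOne_def]
  have hδ : WithConv.toConv (comul (R := k) (A := H)) =
      WithConv.toConv i1.toLinearMap * WithConv.toConv i2.toLinearMap := by
    apply WithConv.ofConv_injective
    have : LinearMap.mul' k (H ⊗[k] H) ∘ₗ TensorProduct.map i1.toLinearMap i2.toLinearMap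
        = LinearMap.id := by
      ext a b; simp [i1, i2]
    change _ = LinearMap.mul' k (H ⊗[k] H) ∘ₗ
      TensorProduct.map i1.toLinearMap i2.toLinearMap ∘ₗ comul
    rw [← LinearMap.comp_assoc, this]; rfl
  have hG : WithConv.toConv (TensorProduct.map (antipode k) (antipode k) ∘ₗ
        (TensorProduct.comm k H H).toLinearMap ∘ₗ comul) =
      WithConv.toConv (i2.toLinearMap ∘ₗ antipode k) *
        WithConv.toConv (i1.toLinearMap ∘ₗ antipode k) := by
    apply WithConv.ofConv_injective
    have : LinearMap.mul' k (H ⊗[k] H) ∘ₗ TensorProduct.map (i2.toLinearMap ∘ₗ antipode k)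
        (i1.toLinearMap ∘ₗ antipode k) = TensorProduct.map (antipode k) (antipode k) ∘ₗ
        (TensorProduct.comm k H H).toLinearMap := by
      ext a b; simp [i1, i2]
    change _ = LinearMap.mul' k (H ⊗[k] H) ∘ₗ TensorProduct.map (i2.toLinearMap ∘ₗ antipode k)
        (i1.toLinearMap ∘ₗ antipode k) ∘ₗ comul
    rw [← LinearMap.comp_assoc, ← LinearMap.comp_assoc, this]
  apply WithConv.toConv_injective
  symm
  refine left_inv_eq_right_inv (a := WithConv.toConv (comul (R := k) (A := H))) ?_
    LinearMap.comul_right_inv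
  rw [hG, hδ, mul_assoc, ← mul_assoc (WithConv.toConv (i1.toLinearMap ∘ₗ antipode k)), hone,
    one_mul, hone]

/-- The square of the antipode is compatible with the comultiplication. -/
theorem comul_antipode_sq_aux [Field k] [Ring H] [HopfAlgebra k H] (x : H) :
    comul (R := k) ((antipode k (A := H) ∘ₗ antipode k (A := H)) x) =
      TensorProduct.map (antipode k (A := H) ∘ₗ antipode k (A := H))
        (antipode k (A := H) ∘ₗ antipode k (A := H)) (comul x) := by
  have h := fun y : H => LinearMap.congr_fun (antipode_anticomul_aux (k := k) (H := H)) y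
  simp only [LinearMap.comp_apply] at h ⊢
  rw [h, h]
  have : TensorProduct.map (antipode k (A := H)) (antipode k (A := H)) ∘ₗ
      (TensorProduct.comm k H H).toLinearMap ∘ₗ
      TensorProduct.map (antipode k (A := H)) (antipode k (A := H)) ∘ₗ
      (TensorProduct.comm k H H).toLinearMap =
      TensorProduct.map (antipode k (A := H) ∘ₗ antipode k (A := H))
        (antipode k (A := H) ∘ₗ antipode k (A := H)) := by
    ext a b; simp
  exact LinearMap.congr_fun this (comul x)

theorem aeval_intertwine_aux {k V W : Type*} [Field k] [AddCommGroup V] [Module k V]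
    [AddCommGroup W] [Module k W] (f : V →ₗ[k] W) (D : Module.End k V) (T : Module.End k W)
    (h : ∀ v, f (D v) = T (f v)) (p : Polynomial k) (v : V) :
    f (Polynomial.aeval D p v) = Polynomial.aeval T p (f v) := by
  induction p using Polynomial.induction_on generalizing v with
  | C a => simp [Module.algebraMap_end_apply]
  | add p q hp hq => simp [hp, hq]
  | monomial n a ih =>
    rw [pow_succ, ← mul_assoc, map_mul (Polynomial.aeval D) _ Polynomial.X,
      map_mul (Polynomial.aeval T) _ Polynomial.X]
    simp only [Module.End.mul_apply, Polynomial.aeval_X]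
    rw [ih, h]

theorem aeval_eigen_aux {k V : Type*} [Field k] [AddCommGroup V] [Module k V]
    (D : Module.End k V) (c : k) (p : Polynomial k) (v : V) (h : D v = c • v) :
    Polynomial.aeval D p v = p.eval c • v := by
  induction p using Polynomial.induction_on with
  | C a => simp [Module.algebraMap_end_apply]
  | add p q hp hq => simp [hp, hq, add_smul]
  | monomial n a ih =>
    rw [pow_succ', mul_left_comm, map_mul]
    simp only [Module.End.mul_apply, Polynomial.aeval_X]
    rw [ih, map_smul, h, smul_smul]
    congr 1
    simp only [Polynomial.eval_mul, Polynomial.eval_C, Polynomial.eval_pow, Polynomial.eval_X]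
    ring

theorem eqOn_tmul_aux [Field k] [AddCommGroup H] [Module k H]
    (U V : Submodule k H) (f g : H ⊗[k] H →ₗ[k] H ⊗[k] H)
    (h : ∀ u ∈ U, ∀ v ∈ V, f (u ⊗ₜ v) = g (u ⊗ₜ v)) : Submodule.tmul U V ≤ LinearMap.eqLocus f g := by
  rintro _ ⟨z, rfl⟩
  induction z using TensorProduct.induction_on with
  | zero => simp
  | tmul a b => exact h a a.2 b b.2
  | add a b ha hb => rw [map_add]; exact add_mem ha hb

/-- Let `H` be a Hopf algebra over a field `k` such that `D := S ∘ S` is a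
bialgebra automorphism with `D^m = id`, `H` is the direct sum of the eigenspaces
`E_{D,q^i}` for a primitive `m`-th root of unity `q` (with `r` of order `2m`, `r² = q`,
available when `m` is even).  If `K := E_{D,1}` and `M := ⨁_{i ≠ 0} E_{D,q^i}` form a
trivial extension, then `H` is almost involutive. -/
theorem almostInvolutive_of_trivial_extension_of_fixed_points
    [Field k] [Ring H] [HopfAlgebra k H]
    (hbij : Function.Bijective
      (antipode (R := k) (A := H) ∘ₗ antipode (R := k) (A := H)))
    (m : ℕ) (hm : 0 < m)
    (hDm : ((antipode (R := k) (A := H) ∘ₗ antipode (R := k) (A := H)) ^ m :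
      Module.End k H) = 1)
    (q : k) (hq : IsPrimitiveRoot q m)
    (hreven : Even m → ∃ r : k, IsPrimitiveRoot r (2 * m) ∧ r ^ 2 = q)
    (hinternal : DirectSum.IsInternal (fun i : Fin m =>
      Module.End.eigenspace (antipode (R := k) (A := H) ∘ₗ antipode (R := k) (A := H))
        (q ^ (i : ℕ))))
    (K M : Submodule k H)
    (hKdef : K = Module.End.eigenspace
      (antipode (R := k) (A := H) ∘ₗ antipode (R := k) (A := H)) (1 : k))
    (hMdef : M = ⨆ (i : Fin m) (_ : (i : ℕ) ≠ 0),
      Module.End.eigenspace (antipode (R := k) (A := H) ∘ₗ antipode (R := k) (A := H))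
        (q ^ (i : ℕ)))
    -- the trivial extension assumptions
    (hK1 : (1 : H) ∈ K) (hKmul : K * K ≤ K)
    (hKcomul : Submodule.map (comul (R := k)) K ≤ Submodule.tmul K K)
    (hKS : ∀ x ∈ K, antipode (R := k) x ∈ K)
    (hKM : K * M ⊔ M * K ≤ M)
    (hMcomul : Submodule.map (comul (R := k)) M ≤ Submodule.tmul K M ⊔ Submodule.tmul M K)
    (hMS : ∀ x ∈ M, antipode (R := k) x ∈ M)
    (hMM : M * M = ⊥) :
    ∃ σ : H ≃ₐc[k] H,
      ∀ x : H, σ (σ x) = antipode (R := k) (antipode (R := k) x) := by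
  set D : Module.End k H := antipode (R := k) (A := H) ∘ₗ antipode (R := k) (A := H) with hD
  obtain ⟨r, hr⟩ : ∃ r : k, r ^ 2 = q := by
    rcases Nat.even_or_odd m with he | ⟨n, hn⟩
    · obtain ⟨r, _, hr⟩ := hreven he
      exact ⟨r, hr⟩
    · refine ⟨q ^ (n + 1), ?_⟩
      rw [← pow_mul, show (n + 1) * 2 = m + 1 by omega, pow_succ, hq.pow_eq_one, one_mul]
  obtain ⟨p, hp⟩ : ∃ p : Polynomial k, ∀ i : Fin m, p.eval (q ^ (i : ℕ)) = r ^ (i : ℕ) := by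
    refine ⟨Lagrange.interpolate Finset.univ (fun i : Fin m => q ^ (i : ℕ))
      (fun i => r ^ (i : ℕ)), fun i => ?_⟩
    refine Lagrange.eval_interpolate_at_node (v := fun i : Fin m => q ^ (i : ℕ)) _ ?_
      (Finset.mem_univ i)
    intro a _ b _ hab
    exact Fin.ext (hq.pow_inj a.2 b.2 hab)
  have hp1 : p.eval 1 = 1 := by simpa using hp ⟨0, hm⟩
  set P : Module.End k H := Polynomial.aeval D p with hP
  have hPE : ∀ (i : Fin m) (x : H), x ∈ Module.End.eigenspace D (q ^ (i : ℕ)) →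
      P x = r ^ (i : ℕ) • x := by
    intro i x hx
    rw [hP, aeval_eigen_aux D _ p x (Module.End.mem_eigenspace_iff.1 hx), hp]
  have hDK : ∀ x ∈ K, D x = x := by
    intro x hx
    rw [hKdef, Module.End.mem_eigenspace_iff, one_smul] at hx
    exact hx
  have hPK : ∀ x ∈ K, P x = x := by
    intro x hx
    rw [hP, aeval_eigen_aux D 1 p x (by rw [one_smul]; exact hDK x hx), hp1, one_smul]
  have hPM : ∀ x ∈ M, P x ∈ M := by
    have : M ≤ M.comap P := by
      conv_lhs => rw [hMdef]
      refine iSup₂_le fun i hi x hx => ?_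
      rw [Submodule.mem_comap, hPE i x hx]
      refine M.smul_mem _ ?_
      rw [hMdef]
      exact Submodule.mem_iSup_of_mem i (Submodule.mem_iSup_of_mem hi hx)
    exact this
  have htop := hinternal.submodule_iSup_eq_top
  have hKMtop : K ⊔ M = ⊤ := by
    rw [eq_top_iff, ← htop]
    refine iSup_le fun i => ?_
    by_cases hi : (i : ℕ) = 0
    · refine le_trans ?_ le_sup_left
      rw [hKdef, hi, pow_zero]
    · refine le_trans ?_ le_sup_right
      rw [hMdef]
      exact le_iSup₂_of_le i hi le_rfl
  have hPP : ∀ x, P (P x) = D x := by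
    have : (⊤ : Submodule k H) ≤ LinearMap.eqLocus (P ∘ₗ P) D := by
      rw [← htop]
      refine iSup_le fun i x hx => ?_
      change P (P x) = D x
      rw [hPE i x hx, map_smul, hPE i x hx, smul_smul, Module.End.mem_eigenspace_iff.1 hx,
        ← pow_add, ← hr, ← pow_mul, two_mul]
    exact fun x => this trivial
  have hDmul : ∀ x y, D (x * y) = D x * D y := by
    intro x y
    simp [hD, antipode_mul_antidistrib]
  have hPl : ∀ x ∈ K, ∀ y, P (x * y) = x * P y := by
    intro x hx y
    exact (aeval_intertwine_aux (LinearMap.mulLeft k x) D D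
      (fun v => by simp [hDmul, hDK x hx]) p y).symm
  have hPr : ∀ x ∈ K, ∀ y, P (y * x) = P y * x := by
    intro x hx y
    exact (aeval_intertwine_aux (LinearMap.mulRight k x) D D
      (fun v => by simp [hDmul, hDK x hx]) p y).symm
  have hMM0 : ∀ x ∈ M, ∀ y ∈ M, x * y = 0 := by
    intro x hx y hy
    have := Submodule.mul_mem_mul hx hy
    rwa [hMM, Submodule.mem_bot] at this
  have hPmul : ∀ x y, P (x * y) = P x * P y := by
    intro x y
    obtain ⟨a, ha, b, hb, rfl⟩ := Submodule.mem_sup.1 (hKMtop ▸ Submodule.mem_top : x ∈ K ⊔ M)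
    obtain ⟨c, hc, d, hd, rfl⟩ := Submodule.mem_sup.1 (hKMtop ▸ Submodule.mem_top : y ∈ K ⊔ M)
    simp only [add_mul, mul_add, map_add, hPl a ha, hPr c hc, hPK a ha, hPK c hc,
      hMM0 b hb d hd, hMM0 _ (hPM b hb) _ (hPM d hd), map_zero]
  have hPcounit : ∀ x, counit (R := k) (P x) = counit (R := k) x := by
    intro x
    rw [hP, aeval_intertwine_aux (counit (R := k) (A := H)) D 1 (fun v => by simp [hD]) p x,
      aeval_eigen_aux 1 1 p _ (by simp), hp1, one_smul]
  have hPcomul : ∀ x, TensorProduct.map P P (comul (R := k) x) = comul (R := k) (P x) := by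
    intro x
    rw [hP, aeval_intertwine_aux (comul (R := k) (A := H)) D (TensorProduct.map D D)
      comul_antipode_sq_aux p x, ← hP]
    have hl : ∀ u ∈ K, ∀ v, TensorProduct.map P P (u ⊗ₜ[k] v) =
        Polynomial.aeval (TensorProduct.map D D : Module.End k (H ⊗[k] H)) p (u ⊗ₜ[k] v) := by
      intro u hu v
      rw [TensorProduct.map_tmul, hPK u hu]
      exact aeval_intertwine_aux (TensorProduct.mk k H H u) D (TensorProduct.map D D)
        (fun v => by simp [hDK u hu]) p v
    have hr' : ∀ u ∈ K, ∀ v, TensorProduct.map P P (v ⊗ₜ[k] u) =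
        Polynomial.aeval (TensorProduct.map D D : Module.End k (H ⊗[k] H)) p (v ⊗ₜ[k] u) := by
      intro u hu v
      rw [TensorProduct.map_tmul, hPK u hu]
      exact aeval_intertwine_aux ((TensorProduct.mk k H H).flip u) D (TensorProduct.map D D)
        (fun v => by simp [hDK u hu]) p v
    have hx : x ∈ K ⊔ M := hKMtop ▸ Submodule.mem_top
    have key : K ⊔ M ≤ (LinearMap.eqLocus (TensorProduct.map P P)
        (Polynomial.aeval (TensorProduct.map D D : Module.End k (H ⊗[k] H)) p)).comap
          (comul (R := k) (A := H)) := by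
      refine sup_le ?_ ?_
      · rw [← Submodule.map_le_iff_le_comap]
        exact hKcomul.trans (eqOn_tmul_aux _ _ _ _ fun u hu v _ => hl u hu v)
      · rw [← Submodule.map_le_iff_le_comap]
        exact hMcomul.trans (sup_le (eqOn_tmul_aux _ _ _ _ fun u hu v _ => hl u hu v)
          (eqOn_tmul_aux _ _ _ _ fun u _ v hv => hr' v hv u))
    exact key hx
  have hPbij : Function.Bijective P := by
    constructor
    · intro x y hxy
      apply hbij.1
      rw [← hPP, ← hPP, hxy]
    · intro y
      obtain ⟨x, hx⟩ := hbij.2 y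
      exact ⟨P x, by rw [hPP, hx]⟩
  let f : H →ₐ[k] H := AlgHom.ofLinearMap P (hPK 1 hK1) hPmul
  let F : H →ₐc[k] H :=
    { f with
      map_smul' := fun c x => map_smul P c x
      counit_comp := LinearMap.ext hPcounit
      map_comp_comul := LinearMap.ext hPcomul }
  exact ⟨BialgEquiv.ofBijective F hPbij, hPP⟩
end
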